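/- Let D be a unicycle digraph possessing two distinct kernels K_1 and K_2. Then the unique cycle of D is a directed circuit of even length, the vertices along this circuit alternate between belonging to K_1 and belonging to K_2 (every circuit vertex lies in exactly one of the two kernels, and consecutive circuit vertices lie in different kernels), and in each kernel the circuit vertices it contains form every other vertex of the circuit. -/

import Mathlib

/-- A digraph on the vertex set `Fin n`: a loopless Boolean arc relation (no multiple arcs
in the same direction, but the two opposite arcs may both be present). -/
structure FinDigraph (n : ℕ) where
  arc : Fin n → Fin n → Bool
  loopless : ∀ v, arc v v = false

/-- The number of arcs of a digraph. -/
def arcCount {n : ℕ} (D : FinDigraph n) : ℕ :=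
  (Finset.univ.filter fun p : Fin n × Fin n => D.arc p.1 p.2 = true).card

/-- Weak connectivity: the underlying undirected graph is connected. -/
def WeaklyConnected {n : ℕ} (D : FinDigraph n) : Prop :=
  (SimpleGraph.fromRel fun v w => D.arc v w = true).Connected

/-- A unicycle digraph: weakly connected with at most one cycle (a cycle being a closed
undirected path of length ≥ 2, a pair of opposite arcs counting as a cycle of length 2).
For a weakly connected digraph this is equivalent to having at most as many arcs as
vertices. -/
def IsUnicycle {n : ℕ} (D : FinDigraph n) : Prop :=
  WeaklyConnected D ∧ arcCount D ≤ n

/-- A unicircuit digraph: a unicycle digraph whose cycle, if it exists (i.e. when the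
number of arcs equals the number of vertices), is a directed circuit (equivalently, there
is a directed closed walk). -/
def IsUnicircuit {n : ℕ} (D : FinDigraph n) : Prop :=
  IsUnicycle D ∧
    (arcCount D = n → ∃ v, Relation.TransGen (fun a b => D.arc a b = true) v v)

/-- A kernel of a digraph: a nonempty independent dominating set of vertices. -/
def IsKernel {n : ℕ} (D : FinDigraph n) (K : Finset (Fin n)) : Prop :=
  K.Nonempty ∧ (∀ a ∈ K, ∀ b ∈ K, D.arc a b = false) ∧
    (∀ a, a ∉ K → ∃ b ∈ K, D.arc a b = true)

/-- `v : ZMod m → Fin n` parametrizes a cycle of the digraph `D`: `m ≥ 2`, the vertices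
`v 0, …, v (m-1)` are pairwise distinct, consecutive vertices are joined by an arc in at
least one direction, and in the degenerate case `m = 2` both opposite arcs are present
(a pair of opposite arcs counts as a cycle of length 2). -/
def IsCycleMap {n : ℕ} (D : FinDigraph n) (m : ℕ) (v : ZMod m → Fin n) : Prop :=
  2 ≤ m ∧ Function.Injective v ∧
  (∀ i, D.arc (v i) (v (i + 1)) = true ∨ D.arc (v (i + 1)) (v i) = true) ∧
  (m = 2 → D.arc (v 0) (v 1) = true ∧ D.arc (v 1) (v 0) = true)

/-!
A vertex `x` of `K₁ \ K₂` has an out-neighbour in `K₂`, since `K₂` is dominating, and this neighbour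
is not in `K₁`, since `K₁` is independent. So every vertex of `K₁ ∆ K₂` has an out-neighbour in
`K₁ ∆ K₂` lying in the other kernel, and following these arcs eventually closes an alternating
directed circuit.

Uniqueness is an arc count: deleting an arc of a cycle keeps the digraph weakly connected. If one of
two cycles had a vertex off the other, one could delete an arc of the first at that vertex, which
leaves the other intact, and then an arc of the other. The result would be weakly connected with
fewer than `n - 1` arcs.
-/

theorem exists_mem_periodicPts {α : Type*} [Finite α] [Nonempty α] (f : α → α) :
    ∃ x, x ∈ Function.periodicPts f := by
  obtain ⟨x⟩ := ‹Nonempty α›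
  obtain ⟨i, j, hlt, h⟩ : ∃ i j, i < j ∧ f^[i] x = f^[j] x := by
    obtain ⟨i, j, hij, h⟩ := Finite.exists_ne_map_eq_of_infinite fun k : ℕ => f^[k] x
    obtain hlt | hlt := hij.lt_or_gt
    · exact ⟨i, j, hlt, h⟩
    · exact ⟨j, i, hlt, h.symm⟩
  refine ⟨f^[i] x, Function.mk_mem_periodicPts (Nat.sub_pos_of_lt hlt) ?_⟩
  rw [Function.IsPeriodicPt, Function.IsFixedPt, ← Function.iterate_add_apply,
    Nat.sub_add_cancel hlt.le, h]

theorem exists_injective_zmod_of_leftTotal {α : Type*} [Finite α] [Nonempty α]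
    {r : α → α → Prop} (hr : Relator.LeftTotal r) :
    ∃ m ≠ 0, ∃ v : ZMod m → α, Function.Injective v ∧ ∀ i, r (v i) (v (i + 1)) := by
  choose f hf using hr
  obtain ⟨x, hx⟩ := exists_mem_periodicPts f
  have hm := (Function.minimalPeriod_pos_of_mem_periodicPts hx).ne'
  have : NeZero (Function.minimalPeriod f x) := ⟨hm⟩
  refine ⟨_, hm, fun i => f^[i.val] x, fun i j hij => ZMod.val_injective _ ?_, fun i => ?_⟩
  · exact Function.iterate_injOn_Iio_minimalPeriod (ZMod.val_lt i) (ZMod.val_lt j) hij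
  · have hsucc : f^[(i + 1).val] x = f (f^[i.val] x) := by
      rw [ZMod.val_add, Function.iterate_mod_minimalPeriod_eq, ZMod.val_one_eq_one_mod,
        ← Function.iterate_mod_minimalPeriod_eq, Nat.add_mod_mod,
        Function.iterate_mod_minimalPeriod_eq, Function.iterate_succ_apply']
    simpa only [hsucc] using hf _

theorem even_of_forall_add_one_iff_not {m : ℕ} {p : ZMod m → Prop}
    (hp : ∀ i, p (i + 1) ↔ ¬ p i) : Even m := by
  have parity (k : ℕ) : p k ↔ (Even k ↔ p 0) := by
    induction k with
    | zero => simp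
    | succ k ih =>
      rw [Nat.cast_add_one, hp, ih, Nat.even_add_one]
      tauto
  have hm := parity m
  rw [ZMod.natCast_self] at hm
  tauto

theorem reachable_of_adj_of_ne {V : Type*} {G : SimpleGraph V} {m : ℕ} [NeZero m]
    {v : ZMod m → V} {i : ZMod m} (hv : ∀ j ≠ i, G.Adj (v j) (v (j + 1))) :
    G.Reachable (v (i + 1)) (v i) := by
  have reach (k : ℕ) (hk : k < m) : G.Reachable (v (i + 1)) (v (i + 1 + k)) := by
    induction k with
    | zero => simp
    | succ k ih =>
      have hne : i + 1 + k ≠ i := by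
        intro h
        have hdvd : ((k + 1 : ℕ) : ZMod m) = 0 := by
          push_cast
          linear_combination h
        exact Nat.not_dvd_of_pos_of_lt k.succ_pos hk ((ZMod.natCast_eq_zero_iff _ _).1 hdvd)
      rw [Nat.cast_add_one, ← add_assoc]
      exact (ih (Nat.lt_of_succ_lt hk)).trans (hv _ hne).reachable
  have hlast := reach (m - 1) (Nat.sub_one_lt (NeZero.ne m))
  rwa [Nat.cast_pred (NeZero.pos m), ZMod.natCast_self, zero_sub, add_neg_cancel_right] at hlast

namespace FinDigraph

variable {n : ℕ} {D : FinDigraph n} {a b : Fin n} {p : Fin n × Fin n}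

/-- The undirected graph underlying a digraph, whose connectivity is weak connectivity. A pair of
opposite arcs becomes a single edge. -/
abbrev underlyingGraph (D : FinDigraph n) : SimpleGraph (Fin n) :=
  SimpleGraph.fromRel fun v w => D.arc v w = true

/-- The digraph obtained from `D` by deleting the arc from `p.1` to `p.2`; the opposite arc, if any,
is kept. -/
def deleteArc (D : FinDigraph n) (p : Fin n × Fin n) : FinDigraph n where
  arc a b := D.arc a b && decide ((a, b) ≠ p)
  loopless v := by simp [D.loopless]

theorem deleteArc_arc : (D.deleteArc p).arc a b = true ↔ D.arc a b = true ∧ (a, b) ≠ p := by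
  simp [deleteArc]

theorem underlyingGraph_adj :
    D.underlyingGraph.Adj a b ↔ D.arc a b = true ∨ D.arc b a = true := by
  rw [SimpleGraph.fromRel_adj, and_iff_right_iff_imp]
  rintro h rfl
  simp [D.loopless] at h

theorem arcCount_deleteArc_lt (hp : D.arc p.1 p.2 = true) :
    arcCount (D.deleteArc p) < arcCount D := by
  refine Finset.card_lt_card ((Finset.ssubset_iff_of_subset fun q hq => ?_).2 ⟨p, ?_, ?_⟩)
  · exact Finset.mem_filter.2 ⟨Finset.mem_univ _, (deleteArc_arc.1 (Finset.mem_filter.1 hq).2).1⟩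
  · simpa using hp
  · simp [deleteArc_arc]

end FinDigraph

namespace WeaklyConnected

variable {n : ℕ} {D : FinDigraph n} {p : Fin n × Fin n}

theorem le_arcCount_add_one (hD : WeaklyConnected D) : n ≤ arcCount D + 1 := by
  classical
  let arcs := Finset.univ.filter fun p : Fin n × Fin n => D.arc p.1 p.2 = true
  have hsub : D.underlyingGraph.edgeSet ⊆ arcs.image fun p => s(p.1, p.2) := by
    rintro ⟨a, b⟩ hab
    obtain h | h := FinDigraph.underlyingGraph_adj.1 hab
    · exact Finset.mem_image.2 ⟨(a, b), by simpa [arcs] using h, rfl⟩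
    · exact Finset.mem_image.2 ⟨(b, a), by simpa [arcs] using h, Sym2.eq_swap⟩
  calc n = Nat.card (Fin n) := (Nat.card_fin n).symm
    _ ≤ Nat.card D.underlyingGraph.edgeSet + 1 :=
      SimpleGraph.Connected.card_vert_le_card_edgeSet_add_one hD
    _ ≤ (arcs.image fun p => s(p.1, p.2)).card + 1 := by
      grw [Nat.card_mono (Finset.finite_toSet _) hsub, Nat.card_eq_card_toFinset,
        Finset.toFinset_coe]
    _ ≤ arcCount D + 1 := by grw [Finset.card_image_le]; rfl

theorem deleteArc_of_reachable (hD : WeaklyConnected D)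
    (hp : (D.deleteArc p).underlyingGraph.Reachable p.1 p.2) : WeaklyConnected (D.deleteArc p) := by
  have arc_reachable {a b : Fin n} (h : D.arc a b = true) :
      (D.deleteArc p).underlyingGraph.Reachable a b := by
    by_cases hab : (a, b) = p
    · subst hab
      exact hp
    · exact (FinDigraph.underlyingGraph_adj.2
        (.inl (FinDigraph.deleteArc_arc.2 ⟨h, hab⟩))).reachable
  have := hD.nonempty
  refine ⟨fun x y => ?_⟩
  obtain ⟨w⟩ := hD.preconnected x y
  induction w with
  | nil => rfl
  | cons h _ ih =>
    obtain h | h := FinDigraph.underlyingGraph_adj.1 h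
    · exact (arc_reachable h).trans ih
    · exact (arc_reachable h).symm.trans ih

end WeaklyConnected

namespace IsCycleMap

variable {n : ℕ} {D : FinDigraph n} {m : ℕ} {v : ZMod m → Fin n}

theorem of_forall_arc (hm : 2 ≤ m) (hinj : Function.Injective v)
    (harc : ∀ i, D.arc (v i) (v (i + 1)) = true) : IsCycleMap D m v := by
  refine ⟨hm, hinj, fun i => .inl (harc i), ?_⟩
  rintro rfl
  exact ⟨harc 0, harc 1⟩

theorem arc_add_one_of_eq_two (hv : IsCycleMap D m v) (hm : m = 2) (i : ZMod m) :
    D.arc (v i) (v (i + 1)) = true := by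
  subst hm
  obtain ⟨-, -, -, hopp⟩ := hv
  fin_cases i
  exacts [(hopp rfl).1, (hopp rfl).2]

theorem edge_injective (hv : IsCycleMap D m v) (hm : m ≠ 2) :
    Function.Injective fun i => s(v i, v (i + 1)) := by
  obtain ⟨hm2, hinj, -, -⟩ := hv
  intro i j hij
  obtain ⟨h, -⟩ | ⟨h, h'⟩ := Sym2.eq_iff.1 hij
  · exact hinj h
  · have htwo : ((2 : ℕ) : ZMod m) = 0 := by
      push_cast
      linear_combination hinj h' - hinj h
    have hdvd := (ZMod.natCast_eq_zero_iff _ _).1 htwo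
    exact absurd (le_antisymm (Nat.le_of_dvd two_pos hdvd) hm2) hm

theorem exists_injective_arc (hv : IsCycleMap D m v) :
    ∃ e : ZMod m → Fin n × Fin n, Function.Injective e ∧
      ∀ i, D.arc (e i).1 (e i).2 = true ∧ s((e i).1, (e i).2) = s(v i, v (i + 1)) := by
  by_cases hm : m = 2
  · exact ⟨fun i => (v i, v (i + 1)), fun i j hij => hv.2.1 (Prod.mk.inj hij).1,
      fun i => ⟨hv.arc_add_one_of_eq_two hm i, rfl⟩⟩
  · have (i : ZMod m) :
        ∃ p : Fin n × Fin n, D.arc p.1 p.2 = true ∧ s(p.1, p.2) = s(v i, v (i + 1)) := by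
      obtain h | h := hv.2.2.1 i
      exacts [⟨(_, _), h, rfl⟩, ⟨(_, _), h, Sym2.eq_swap⟩]
    choose e he using this
    refine ⟨e, fun i j hij => hv.edge_injective hm ?_, he⟩
    simp only [← (he _).2, hij]

theorem exists_weaklyConnected_deleteArc (hv : IsCycleMap D m v) (hD : WeaklyConnected D)
    (i : ZMod m) :
    ∃ p : Fin n × Fin n, D.arc p.1 p.2 = true ∧ s(p.1, p.2) = s(v i, v (i + 1)) ∧
      WeaklyConnected (D.deleteArc p) := by
  have : NeZero m := ⟨(two_pos.trans_le hv.1).ne'⟩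
  obtain ⟨e, hinj, he⟩ := hv.exists_injective_arc
  refine ⟨e i, (he i).1, (he i).2, hD.deleteArc_of_reachable ?_⟩
  have hadj (j : ZMod m) (hj : j ≠ i) :
      (D.deleteArc (e i)).underlyingGraph.Adj (v j) (v (j + 1)) := by
    rw [← SimpleGraph.mem_edgeSet, ← (he j).2, SimpleGraph.mem_edgeSet,
      FinDigraph.underlyingGraph_adj]
    exact .inl (FinDigraph.deleteArc_arc.2 ⟨(he j).1, hinj.ne hj⟩)
  have hreach := reachable_of_adj_of_ne hadj
  obtain ⟨h, h'⟩ | ⟨h, h'⟩ := Sym2.eq_iff.1 (he i).2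
  · rw [h, h']
    exact hreach.symm
  · rwa [h, h']

theorem le_arcCount (hv : IsCycleMap D m v) (hD : WeaklyConnected D) : n ≤ arcCount D := by
  obtain ⟨p, hp, -, hconn⟩ := hv.exists_weaklyConnected_deleteArc hD 0
  exact hconn.le_arcCount_add_one.trans (FinDigraph.arcCount_deleteArc_lt hp)

theorem deleteArc (hv : IsCycleMap D m v) {p : Fin n × Fin n} {x : Fin n} (hx : x ∈ s(p.1, p.2))
    (hxv : x ∉ Set.range v) : IsCycleMap (D.deleteArc p) m v := by
  have arc_deleteArc {i j : ZMod m} (h : D.arc (v i) (v j) = true) :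
      (D.deleteArc p).arc (v i) (v j) = true := by
    refine FinDigraph.deleteArc_arc.2 ⟨h, ?_⟩
    rintro rfl
    obtain rfl | rfl := Sym2.mem_iff.1 hx
    exacts [hxv ⟨i, rfl⟩, hxv ⟨j, rfl⟩]
  obtain ⟨hm, hinj, hadj, hopp⟩ := hv
  exact ⟨hm, hinj, fun i => (hadj i).imp arc_deleteArc arc_deleteArc,
    fun h => (hopp h).imp arc_deleteArc arc_deleteArc⟩

theorem range_subset_range (hv : IsCycleMap D m v) (hD : IsUnicycle D) {m' : ℕ}
    {v' : ZMod m' → Fin n} (hv' : IsCycleMap D m' v') : Set.range v' ⊆ Set.range v := by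
  obtain ⟨hconn, hcount⟩ := hD
  rintro _ ⟨i, rfl⟩
  by_contra hi
  obtain ⟨p, hp, hpi, hconn'⟩ := hv'.exists_weaklyConnected_deleteArc hconn i
  have hle := (hv.deleteArc (hpi ▸ Sym2.mem_mk_left _ _) hi).le_arcCount hconn'
  exact ((FinDigraph.arcCount_deleteArc_lt hp).trans_le hcount).not_ge hle

theorem range_eq_range (hv : IsCycleMap D m v) (hD : IsUnicycle D) {m' : ℕ}
    {v' : ZMod m' → Fin n} (hv' : IsCycleMap D m' v') : Set.range v' = Set.range v :=
  (hv.range_subset_range hD hv').antisymm (hv'.range_subset_range hD hv)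

end IsCycleMap

namespace IsKernel

open scoped symmDiff

variable {n : ℕ} {D : FinDigraph n} {K₁ K₂ : Finset (Fin n)}

theorem exists_arc_of_mem_sdiff (h1 : IsKernel D K₁) (h2 : IsKernel D K₂) {x : Fin n}
    (hx : x ∈ K₁ \ K₂) : ∃ y ∈ K₂ \ K₁, D.arc x y = true := by
  obtain ⟨-, hindep, -⟩ := h1
  obtain ⟨-, -, hdom⟩ := h2
  obtain ⟨hx1, hx2⟩ := Finset.mem_sdiff.1 hx
  obtain ⟨y, hy2, hxy⟩ := hdom x hx2
  have hy1 : y ∉ K₁ := fun hy1 => by simp [hindep x hx1 y hy1] at hxy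
  exact ⟨y, Finset.mem_sdiff.2 ⟨hy2, hy1⟩, hxy⟩

theorem exists_arc_of_mem_symmDiff (h1 : IsKernel D K₁) (h2 : IsKernel D K₂) {x : Fin n}
    (hx : x ∈ K₁ ∆ K₂) : ∃ y ∈ K₁ ∆ K₂, D.arc x y = true ∧ (x ∈ K₁ ↔ y ∈ K₂) := by
  obtain hx | hx := Finset.mem_union.1 hx
  · obtain ⟨y, hy, hxy⟩ := h1.exists_arc_of_mem_sdiff h2 hx
    rw [Finset.mem_sdiff] at hx hy
    exact ⟨y, Finset.mem_symmDiff.2 (.inr hy), hxy, iff_of_true hx.1 hy.1⟩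
  · obtain ⟨y, hy, hxy⟩ := h2.exists_arc_of_mem_sdiff h1 hx
    rw [Finset.mem_sdiff] at hx hy
    exact ⟨y, Finset.mem_symmDiff.2 (.inl hy), hxy, iff_of_false hx.2 hy.2⟩

theorem exists_alternating_circuit (h1 : IsKernel D K₁) (h2 : IsKernel D K₂) (hne : K₁ ≠ K₂) :
    ∃ m ≠ 0, ∃ v : ZMod m → Fin n, Function.Injective v ∧ (∀ i, v i ∈ K₁ ∆ K₂) ∧
      ∀ i, D.arc (v i) (v (i + 1)) = true ∧ (v i ∈ K₁ ↔ v (i + 1) ∈ K₂) := by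
  have : Nonempty ↥(K₁ ∆ K₂) := (Finset.symmDiff_nonempty.2 hne).to_subtype
  have htotal : Relator.LeftTotal fun x y : ↥(K₁ ∆ K₂) =>
      D.arc x y = true ∧ (x.1 ∈ K₁ ↔ y.1 ∈ K₂) := fun x =>
    let ⟨y, hy, hxy⟩ := h1.exists_arc_of_mem_symmDiff h2 x.2
    ⟨⟨y, hy⟩, hxy⟩
  obtain ⟨m, hm, v, hinj, hv⟩ := exists_injective_zmod_of_leftTotal htotal
  exact ⟨m, hm, fun i => v i, Subtype.val_injective.comp hinj, fun i => (v i).2, hv⟩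

end IsKernel

/-- If a unicycle digraph has two distinct kernels `K₁` and `K₂`, then its unique cycle
is a directed circuit of even length, every circuit vertex lies in exactly one of the two
kernels, and consecutive circuit vertices lie in different kernels (so in each kernel the
circuit vertices form every other vertex of the circuit). -/
theorem stmt13 (n : ℕ) (D : FinDigraph n) (hD : IsUnicycle D)
    (K₁ K₂ : Finset (Fin n)) (h1 : IsKernel D K₁) (h2 : IsKernel D K₂) (hne : K₁ ≠ K₂) :
    ∃ (m : ℕ) (v : ZMod m → Fin n),
      IsCycleMap D m v ∧
      Even m ∧
      (∀ i, D.arc (v i) (v (i + 1)) = true) ∧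
      (∀ (m' : ℕ) (v' : ZMod m' → Fin n), IsCycleMap D m' v' →
        Set.range v' = Set.range v) ∧
      (∀ i, (v i ∈ K₁ ∧ v i ∉ K₂) ∨ (v i ∈ K₂ ∧ v i ∉ K₁)) ∧
      (∀ i, v i ∈ K₁ ↔ v (i + 1) ∈ K₂) := by
  obtain ⟨m, hm, v, hinj, hmem, hv⟩ := h1.exists_alternating_circuit h2 hne
  have hone (i : ZMod m) : (v i ∈ K₁ ∧ v i ∉ K₂) ∨ (v i ∈ K₂ ∧ v i ∉ K₁) :=
    Finset.mem_symmDiff.1 (hmem i)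
  have heven : Even m := even_of_forall_add_one_iff_not (p := fun i => v i ∈ K₁) fun i => by
    have halt := (hv i).2
    have hexactly := hone (i + 1)
    tauto
  have hm2 : 2 ≤ m := Nat.le_of_dvd (Nat.pos_of_ne_zero hm) heven.two_dvd
  have hcycle : IsCycleMap D m v := .of_forall_arc hm2 hinj fun i => (hv i).1
  exact ⟨m, v, hcycle, heven, fun i => (hv i).1, fun _ _ => hcycle.range_eq_range hD, hone,
    fun i => (hv i).2⟩
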